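/- There exists a nonempty computable closed subset K of [0,1]² ⊆ ℝ² such that the subspace K is contractible, and there is a real ε > 0 such that every nonempty Π⁰₁ closed set B ⊆ K which is connected and locally connected satisfies d_H(B, K) ≥ ε (so K *-includes no nonempty connected, locally connected Π⁰₁ subset). -/

import Mathlib

open Set Metric

section TopDefs

variable {α : Type*} [TopologicalSpace α]

/-- `A ⊆ α` is an arc with endpoints `x` and `y`:
a homeomorphic (continuous injective) image of `[0,1]` sending `0 ↦ x`, `1 ↦ y`. -/
def IsArc (A : Set α) (x y : α) : Prop :=
  ∃ f : Set.Icc (0:ℝ) 1 → α, Continuous f ∧ Function.Injective f ∧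
    Set.range f = A ∧ f ⟨0, by norm_num⟩ = x ∧ f ⟨1, by norm_num⟩ = y

/-- A continuum: a nonempty compact connected set. -/
def IsContinuum (X : Set α) : Prop := IsCompact X ∧ IsConnected X

/-- Any two distinct points of `X` are endpoints of an arc contained in `X`. -/
def ArcwiseConnectedSet (X : Set α) : Prop :=
  ∀ x ∈ X, ∀ y ∈ X, x ≠ y → ∃ A, A ⊆ X ∧ IsArc A x y

/-- `X` is unicoherent: for all closed connected `A, B ⊆ X` with `A ∪ B = X`,
the intersection `A ∩ B` is connected. -/
def UnicoherentSet (X : Set α) : Prop :=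
  ∀ A B : Set α, A ⊆ X → B ⊆ X → IsClosed A → IsClosed B →
    IsConnected A → IsConnected B → A ∪ B = X → IsConnected (A ∩ B)

/-- Every subcontinuum of `X` is unicoherent. -/
def HereditarilyUnicoherent (X : Set α) : Prop :=
  ∀ Y, Y ⊆ X → IsContinuum Y → UnicoherentSet Y

/-- A dendroid: an arcwise connected, hereditarily unicoherent continuum. -/
def IsDendroid (X : Set α) : Prop :=
  IsContinuum X ∧ ArcwiseConnectedSet X ∧ HereditarilyUnicoherent X

/-- The unit circle `S¹`. -/
def unitCircle : Set (EuclideanSpace ℝ (Fin 2)) := Metric.sphere 0 1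

/-- A dendrite: a locally connected continuum containing no subset homeomorphic to `S¹`. -/
def IsDendrite (X : Set α) : Prop :=
  IsContinuum X ∧ LocallyConnectedSpace ↥X ∧
    ∀ S : Set α, S ⊆ X → IsEmpty (↥S ≃ₜ ↥unitCircle)

/-- `x` and `y` lie in the same arc-component of `Y`. -/
def SameArcComponent (Y : Set α) (x y : α) : Prop :=
  x = y ∨ ∃ A, A ⊆ Y ∧ IsArc A x y

/-- `x` is a ramification point of `X`: `X \ {x}` has at least three arc-components. -/
def IsRamificationPoint (X : Set α) (x : α) : Prop :=
  x ∈ X ∧ ∃ u v w, u ∈ X \ {x} ∧ v ∈ X \ {x} ∧ w ∈ X \ {x} ∧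
    ¬ SameArcComponent (X \ {x}) u v ∧ ¬ SameArcComponent (X \ {x}) u w ∧
    ¬ SameArcComponent (X \ {x}) v w

/-- A tree (as a continuum): a dendrite with finitely many ramification points. -/
def IsTreeContinuum (X : Set α) : Prop :=
  IsDendrite X ∧ {x | IsRamificationPoint X x}.Finite

end TopDefs

section CompDefs

/-- The rational open ball in `ℝ²` coded by `((q₁, q₂), r)`. -/
def ballOfCode (c : (ℚ × ℚ) × ℚ) : Set (ℝ × ℝ) :=
  {x | dist x (((c.1.1 : ℝ), (c.1.2 : ℝ)) : ℝ × ℝ) < (c.2 : ℝ)}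

/-- A closed set `F ⊆ ℝ²` is `Π⁰₁` if it is the complement of the union of the rational
open balls coded by some c.e. set of codes. -/
def IsPi01Closed (F : Set (ℝ × ℝ)) : Prop :=
  ∃ W : (ℚ × ℚ) × ℚ → Prop, REPred W ∧ F = Set.univ \ ⋃ c ∈ {c | W c}, ballOfCode c

/-- `F ⊆ ℝ²` is c.e. closed if the set of codes of rational open balls meeting `F` is c.e. -/
def IsCEClosed (F : Set (ℝ × ℝ)) : Prop :=
  REPred (fun c : (ℚ × ℚ) × ℚ => (F ∩ ballOfCode c).Nonempty)

/-- A computable closed subset of `ℝ²`: both `Π⁰₁` and c.e. closed. -/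
def IsComputableClosed (F : Set (ℝ × ℝ)) : Prop :=
  IsPi01Closed F ∧ IsCEClosed F

/-- A point of `ℝ²` is computable if the set of codes of rational open balls
containing it is c.e. -/
def IsComputablePoint (x : ℝ × ℝ) : Prop :=
  REPred (fun c : (ℚ × ℚ) × ℚ => x ∈ ballOfCode c)

end CompDefs

section PsiDefs

/-- A tree of binary strings: a set of finite binary strings closed under prefixes. -/
def IsTreeOfStrings (T : Set (List Bool)) : Prop :=
  ∀ σ ∈ T, ∀ τ : List Bool, τ <+: σ → τ ∈ T

/-- The point `ψ(σ) ∈ ℝ²` associated with the binary string `σ`. -/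
noncomputable def psiPt (σ : List Bool) : ℝ × ℝ :=
  ((3:ℝ) ^ (-(σ.length : ℤ)) / 2 +
      2 * ∑ i ∈ Finset.range σ.length,
        (if σ.getD i false then (3:ℝ) ^ (-((i : ℤ) + 1)) else 0),
    (2:ℝ) ^ (-(σ.length : ℤ)))

/-- The planar embedding `Ψ(T)` of a tree `T` of binary strings: the closure of the union
of the segments from `ψ(σ⁻)` to `ψ(σ)` over nonempty `σ ∈ T` (together with the points
`ψ(σ)`, `σ ∈ T`, which makes no difference except for the degenerate trees `∅`, `{⟨⟩}`). -/
noncomputable def PsiSet (T : Set (List Bool)) : Set (ℝ × ℝ) :=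
  closure (psiPt '' T ∪ ⋃ σ ∈ T, ⋃ (_ : σ ≠ []), segment ℝ (psiPt σ.dropLast) (psiPt σ))

end PsiDefs

/-!
`K` is a comb: the graph of a continuous `f : [0,1] → [0,1]` together with the teeth `{x} × [0,1]`
at `x = xᵢ := 1/2 + 2⁻ⁱ⁻²` and at the limit `x = 1/2`. Sliding vertically onto the graph and then
along it contracts `K`.

The function `f` is a sum of bumps which diagonalizes against all `Π⁰₁` sets. For the `n`-th c.e.
set of balls, fix the level `yₙ := 2⁻ⁿ⁻²` and wait until some point `(xᵢ, yₙ)` is covered by an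
enumerated ball. If this happens, at a stage `s ≥ i`, put a bump of height `2⁻ⁿ⁻¹` and width
`2⁻ˢ⁻³` immediately to the right of `xᵢ`, so thin that the graph of `f` crosses the level `yₙ`
inside that ball.

Let `B ⊆ K` be connected and `Π⁰₁`, say the complement of the balls of the `n`-th c.e. set, with
`d_H(B, K) < 1/8`. Projecting to the first coordinate, `B` contains the graph of `f` over
`[1/8, 7/8]` off the teeth. Hence no bump was made for `n`, so no `(xᵢ, yₙ)` is ever covered and `B`
contains all of them, as well as their limit `(1/2, yₙ)`. But between consecutive teeth there is an
abscissa over which `K` has height `0`, so `B` is not locally connected at `(1/2, yₙ)`.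

`K` is computable although `f` need not be: whether a stage makes a bump is
decidable, and the bumps of stages `≥ t` lie within `2⁻ᵗ⁻³` of a full tooth. So the teeth together
with the graph of the sum of the first `t` bumps approximate `K` within `2⁻ᵗ`.
-/

open Filter Topology

section ComputablePredicates

variable {α β σ : Type*} [Primcodable α] [Primcodable β] [Primcodable σ]

attribute [fun_prop] Computable Computable.id Computable.const Computable.comp Computable.fst
  Computable.snd Computable.pair Computable.encode Computable.unpair

attribute [fun_prop] ComputablePred ComputablePred.not

@[fun_prop]
theorem computablePred_comp {p : β → Prop} {f : α → β} (hp : ComputablePred p)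
    (hf : Computable f) : ComputablePred fun a => p (f a) := by
  classical exact (hp.decide.comp hf).computablePred

@[fun_prop]
theorem computablePred_and {p q : α → Prop} (hp : ComputablePred p) (hq : ComputablePred q) :
    ComputablePred fun a => p a ∧ q a := by
  classical
  exact ((Primrec.and.to_comp.comp hp.decide hq.decide).of_eq fun a => by simp).computablePred

@[fun_prop]
theorem computablePred_imp {p q : α → Prop} (hp : ComputablePred p) (hq : ComputablePred q) :
    ComputablePred fun a => p a → q a :=
  (show ComputablePred fun a => ¬(p a ∧ ¬q a) by fun_prop).of_eq fun _ => by tauto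

@[fun_prop]
theorem computablePred_eq {f g : α → β} (hf : Computable f) (hg : Computable g) :
    ComputablePred fun a => f a = g a :=
  computablePred_comp (p := fun x : β × β => x.1 = x.2) Primrec.eq.computablePred (hf.pair hg)

@[fun_prop]
theorem computablePred_nat_lt {f g : α → ℕ} (hf : Computable f) (hg : Computable g) :
    ComputablePred fun a => f a < g a :=
  computablePred_comp (p := fun x : ℕ × ℕ => x.1 < x.2) Primrec.nat_lt.computablePred (hf.pair hg)

@[fun_prop]
theorem computablePred_nat_le {f g : α → ℕ} (hf : Computable f) (hg : Computable g) :
    ComputablePred fun a => f a ≤ g a :=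
  computablePred_comp (p := fun x : ℕ × ℕ => x.1 ≤ x.2) Primrec.nat_le.computablePred (hf.pair hg)

@[fun_prop]
theorem computable_ite {p : α → Prop} [DecidablePred p] {f g : α → σ} (hp : ComputablePred p)
    (hf : Computable f) (hg : Computable g) : Computable fun a => if p a then f a else g a :=
  (Computable.cond hp.decide hf hg).of_eq fun a => by by_cases h : p a <;> simp [h]

theorem computable_nat_rec {N : α → ℕ} {base : α → σ} {step : α → ℕ → σ → σ} (hN : Computable N)
    (hbase : Computable base) (hstep : Computable fun x : α × ℕ × σ => step x.1 x.2.1 x.2.2) :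
    Computable fun a => Nat.rec (motive := fun _ => σ) (base a) (step a) (N a) :=
  Computable.nat_rec hN hbase hstep.to₂

theorem computablePred_forall_lt {p : α → ℕ → Prop} {N : α → ℕ}
    (hp : ComputablePred fun x : α × ℕ => p x.1 x.2) (hN : Computable N) :
    ComputablePred fun a => ∀ k < N a, p a k := by
  classical
  have hstep : Computable fun x : α × ℕ × Bool => if p x.1 x.2.1 then x.2.2 else false :=
    computable_ite (computablePred_comp hp (f := fun x : α × ℕ × Bool => (x.1, x.2.1))
      (by fun_prop)) (by fun_prop) (by fun_prop)
  refine ((computable_nat_rec (step := fun a k b => if p a k then b else false) hN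
    (Computable.const true) hstep).of_eq fun a => ?_).computablePred
  induction N a with
  | zero => simp
  | succ n ih => by_cases hn : p a n <;> simp only [ih, Nat.forall_lt_succ_right, hn] <;> simp

theorem computablePred_exists_lt {p : α → ℕ → Prop} {N : α → ℕ}
    (hp : ComputablePred fun x : α × ℕ => p x.1 x.2) (hN : Computable N) :
    ComputablePred fun a => ∃ k < N a, p a k :=
  (computablePred_forall_lt (p := fun a k => ¬p a k) hp.not hN).not.of_eq fun a => by simp

theorem rePred_exists {p : α → ℕ → Prop} (hp : ComputablePred fun x : α × ℕ => p x.1 x.2) :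
    REPred fun a => ∃ k, p a k := by
  classical
  have hsearch : Partrec fun a => Nat.rfind fun k => Part.some (decide (p a k)) :=
    Partrec.rfind hp.decide.partrec
  refine hsearch.dom_re.of_eq fun a => Nat.rfind_dom.trans ⟨?_, ?_⟩
  · exact fun ⟨k, hk, _⟩ => ⟨k, by simpa using hk⟩
  · exact fun ⟨k, hk⟩ => ⟨k, by simpa using hk, fun _ => trivial⟩

theorem computable_of_computablePred_graph {γ : Type*} [Denumerable γ] {f : α → γ}
    (hf : ComputablePred fun x : α × γ => f x.1 = x.2) : Computable f := by
  classical
  have hfound : ∀ a, ∃ n, f a = Denumerable.ofNat γ n := fun a => ⟨Encodable.encode (f a), by simp⟩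
  have hsearch : Computable fun a => Nat.find (hfound a) :=
    Computable.find (P := fun a n => f a = Denumerable.ofNat γ n)
      (computablePred_comp hf (Computable.fst.pair ((Computable.ofNat γ).comp Computable.snd)))
      hfound
  exact ((Computable.ofNat γ).comp hsearch).of_eq fun a => (Nat.find_spec (hfound a)).symm

end ComputablePredicates

section ComputableNat

variable {α : Type*} [Primcodable α] {f g : α → ℕ}

@[fun_prop]
theorem computable_nat_add (hf : Computable f) (hg : Computable g) :
    Computable fun a => f a + g a :=
  Primrec.nat_add.to_comp.comp hf hg

@[fun_prop]
theorem computable_nat_mul (hf : Computable f) (hg : Computable g) :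
    Computable fun a => f a * g a :=
  Primrec.nat_mul.to_comp.comp hf hg

@[fun_prop]
theorem computable_nat_div (hf : Computable f) (hg : Computable g) :
    Computable fun a => f a / g a :=
  Primrec.nat_div.to_comp.comp hf hg

@[fun_prop]
theorem computable_nat_mod (hf : Computable f) (hg : Computable g) :
    Computable fun a => f a % g a :=
  Primrec.nat_mod.to_comp.comp hf hg

@[fun_prop]
theorem computable_nat_pow (hf : Computable f) (hg : Computable g) :
    Computable fun a => f a ^ g a :=
  (Primrec₂.unpaired'.1 Nat.Primrec.pow).to_comp.comp hf hg

theorem computablePred_coprime (hf : Computable f) (hg : Computable g) :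
    ComputablePred fun a => (f a).Coprime (g a) := by
  have hdvd : ComputablePred fun x : α × ℕ => f x.1 % x.2 = 0 → g x.1 % x.2 = 0 → x.2 = 1 := by
    fun_prop
  refine (computablePred_forall_lt (p := fun a d => f a % d = 0 → g a % d = 0 → d = 1)
    (N := fun a => f a + g a + 1) hdvd (by fun_prop)).of_eq fun a =>
      ⟨fun h => ?_, fun h d _ hf hg => ?_⟩
  · have hle : (f a).gcd (g a) ≤ f a + g a := by
      rcases (f a).eq_zero_or_pos with h0 | h0
      · simp [h0]
      · exact (Nat.gcd_le_left _ h0).trans (Nat.le_add_right _ _)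
    exact h _ (Nat.lt_succ_of_le hle) (Nat.mod_eq_zero_of_dvd (Nat.gcd_dvd_left _ _))
      (Nat.mod_eq_zero_of_dvd (Nat.gcd_dvd_right _ _))
  · exact Nat.eq_one_of_dvd_coprimes h (Nat.dvd_of_mod_eq_zero hf) (Nat.dvd_of_mod_eq_zero hg)

theorem computable_count {p : ℕ → Prop} [DecidablePred p] (hp : ComputablePred p) :
    Computable (Nat.count p) := by
  refine (computable_nat_rec (step := fun _ n k => k + if p n then 1 else 0) Computable.id
    (Computable.const 0) (by fun_prop)).of_eq fun n => ?_
  induction n with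
  | zero => simp
  | succ n ih => simp_all [Nat.count_succ]

theorem computable_nth {p : ℕ → Prop} (hp : ComputablePred p) (hinf : (Set.ofPred p).Infinite) :
    Computable (Nat.nth p) := by
  classical
  have hcount := computable_count hp
  have hgraph : ComputablePred fun x : ℕ × ℕ => p x.2 ∧ Nat.count p x.2 = x.1 := by fun_prop
  refine computable_of_computablePred_graph (hgraph.of_eq fun x => ⟨?_, ?_⟩)
  · rintro ⟨hmem, hcount⟩
    rw [← hcount, Nat.nth_count hmem]
  · rintro hnth
    rw [← hnth]
    exact ⟨Nat.nth_mem_of_infinite hinf _, Nat.count_nth_of_infinite hinf _⟩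

end ComputableNat

section ComputableInt

variable {α : Type*} [Primcodable α]

theorem encode_int_ofNat (n : ℕ) : Encodable.encode (Int.ofNat n) = 2 * n :=
  rfl

theorem encode_int_negSucc (n : ℕ) : Encodable.encode (Int.negSucc n) = 2 * n + 1 :=
  rfl

@[fun_prop]
theorem computable_int_toNat {f : α → ℤ} (hf : Computable f) :
    Computable fun a => (f a).toNat := by
  have hcode : Computable fun a => if Encodable.encode (f a) % 2 = 0
      then Encodable.encode (f a) / 2 else 0 := by fun_prop
  refine hcode.of_eq fun a => ?_
  rcases f a with n | n
  · rw [encode_int_ofNat]; grind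
  · rw [encode_int_negSucc]; grind

@[fun_prop]
theorem computable_int_neg_toNat {f : α → ℤ} (hf : Computable f) :
    Computable fun a => (-f a).toNat := by
  have hcode : Computable fun a => if Encodable.encode (f a) % 2 = 0
      then 0 else Encodable.encode (f a) / 2 + 1 := by fun_prop
  refine hcode.of_eq fun a => ?_
  rcases f a with n | n
  · rw [encode_int_ofNat]; grind
  · rw [encode_int_negSucc]; grind

@[fun_prop]
theorem computable_int_natCast_sub_natCast {f g : α → ℕ} (hf : Computable f) (hg : Computable g) :
    Computable fun a => (f a : ℤ) - g a := by
  have hgraph : ComputablePred fun x : α × ℤ => f x.1 + (-x.2).toNat = g x.1 + x.2.toNat := by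
    fun_prop
  exact computable_of_computablePred_graph (hgraph.of_eq fun x => by omega)

@[fun_prop]
theorem computable_int_natCast {f : α → ℕ} (hf : Computable f) : Computable fun a => (f a : ℤ) :=
  (computable_int_natCast_sub_natCast hf (Computable.const 0)).of_eq fun a => by simp

variable {f g : α → ℤ}

@[fun_prop]
theorem computable_int_add (hf : Computable f) (hg : Computable g) :
    Computable fun a => f a + g a := by
  have hparts : Computable fun a => (((f a).toNat + (g a).toNat : ℕ) : ℤ) -
      ((-f a).toNat + (-g a).toNat : ℕ) := by fun_prop
  exact hparts.of_eq fun a => by omega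

@[fun_prop]
theorem computable_int_mul (hf : Computable f) (hg : Computable g) :
    Computable fun a => f a * g a := by
  have hparts : Computable fun a =>
      (((f a).toNat * (g a).toNat + (-f a).toNat * (-g a).toNat : ℕ) : ℤ) -
      ((f a).toNat * (-g a).toNat + (-f a).toNat * (g a).toNat : ℕ) := by fun_prop
  refine hparts.of_eq fun a => ?_
  calc _ = (((f a).toNat : ℤ) - (-f a).toNat) * ((g a).toNat - (-g a).toNat) := by
        push_cast; ring
    _ = f a * g a := by rw [Int.toNat_sub_toNat_neg, Int.toNat_sub_toNat_neg]

@[fun_prop]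
theorem computablePred_int_lt (hf : Computable f) (hg : Computable g) :
    ComputablePred fun a => f a < g a := by
  have hparts : ComputablePred fun a =>
      (f a).toNat + (-g a).toNat < (g a).toNat + (-f a).toNat := by fun_prop
  exact hparts.of_eq fun a => by omega

end ComputableInt

section ComputableRat

-- The instance `Primcodable ℚ` does not encode a fraction as a pair: it is the `Denumerable`
-- instance which lists the pair codes `Rat.instEncodable.encode q` in increasing order. Numerator
-- and denominator are computable because the set of these pair codes is.
theorem encode_ofNat_ofEncodableOfInfinite {γ : Type*} [e : Encodable γ] [Infinite γ] (n : ℕ) :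
    e.encode (@Denumerable.ofNat γ (Denumerable.ofEncodableOfInfinite γ) n) =
      Nat.nth (· ∈ range e.encode) n := by
  let := Encodable.decidableRangeEncode γ
  have hinf : (range e.encode).Infinite := infinite_range_of_injective e.encode_injective
  have := hinf.to_subtype
  calc e.encode (@Denumerable.ofNat γ (Denumerable.ofEncodableOfInfinite γ) n)
      = (Nat.Subtype.ofNat (range e.encode) n : ℕ) :=
        congrArg Subtype.val (Equiv.apply_symm_apply (Encodable.equivRangeEncode γ) _)
    _ = (Nat.Subtype.orderIsoOfNat (range e.encode) n : ℕ) := by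
        rw [Nat.Subtype.orderIsoOfNat_apply]
    _ = Nat.nth (· ∈ range e.encode) n := (Nat.nth_apply_eq_orderIsoOfNat hinf n).symm

theorem computable_encode_of_ofEncodableOfInfinite {γ : Type*} [e : Encodable γ] [Infinite γ]
    (hrange : ComputablePred (· ∈ range e.encode)) :
    @Computable γ ℕ (@Primcodable.ofDenumerable γ (Denumerable.ofEncodableOfInfinite γ)) _
      e.encode := by
  let d := Denumerable.ofEncodableOfInfinite γ
  have hnth := computable_nth hrange (infinite_range_of_injective e.encode_injective)
  refine (hnth.comp (@Computable.encode γ (@Primcodable.ofDenumerable γ d))).of_eq fun x => ?_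
  rw [← encode_ofNat_ofEncodableOfInfinite, @Denumerable.ofNat_encode γ d]

theorem encode_rat_eq_pair (q : ℚ) : Rat.instEncodable.encode q =
    Nat.pair (Encodable.encode q.num) q.den :=
  rfl

theorem mem_range_encode_rat_iff (m : ℕ) : m ∈ range Rat.instEncodable.encode ↔
    0 < m.unpair.2 ∧ (Denumerable.ofNat ℤ m.unpair.1).natAbs.Coprime m.unpair.2 := by
  constructor
  · rintro ⟨q, rfl⟩
    simp only [encode_rat_eq_pair, Nat.unpair_pair, Denumerable.ofNat_encode]
    exact ⟨q.den_pos, q.reduced⟩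
  · rintro ⟨hpos, hcop⟩
    refine ⟨⟨_, _, hpos.ne', hcop⟩, ?_⟩
    simp only [encode_rat_eq_pair, Denumerable.encode_ofNat, Nat.pair_unpair]

theorem computablePred_mem_range_encode_rat :
    ComputablePred (· ∈ range Rat.instEncodable.encode) := by
  have hnum : Computable (Denumerable.ofNat ℤ) := Computable.ofNat ℤ
  have hcop : ComputablePred fun m : ℕ => ((Denumerable.ofNat ℤ m.unpair.1).toNat +
      (-Denumerable.ofNat ℤ m.unpair.1).toNat).Coprime m.unpair.2 :=
    computablePred_coprime (by fun_prop) (by fun_prop)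
  have hden : ComputablePred fun m : ℕ => 0 < m.unpair.2 := by fun_prop
  refine (computablePred_and hden hcop).of_eq fun m => ?_
  rw [mem_range_encode_rat_iff, Int.toNat_add_toNat_neg_eq_natAbs]

theorem computable_encode_rat : Computable Rat.instEncodable.encode :=
  computable_encode_of_ofEncodableOfInfinite computablePred_mem_range_encode_rat

variable {α : Type*} [Primcodable α] {f g : α → ℚ}

@[fun_prop]
theorem computable_rat_num (hf : Computable f) : Computable fun a => (f a).num := by
  have hcode := computable_encode_rat
  have hnum : Computable (Denumerable.ofNat ℤ) := Computable.ofNat ℤ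
  exact (show Computable fun a => Denumerable.ofNat ℤ (Rat.instEncodable.encode (f a)).unpair.1 by
    fun_prop).of_eq fun a => by
      rw [encode_rat_eq_pair, Nat.unpair_pair, Denumerable.ofNat_encode]

@[fun_prop]
theorem computable_rat_den (hf : Computable f) : Computable fun a => (f a).den := by
  have hcode := computable_encode_rat
  exact (show Computable fun a => (Rat.instEncodable.encode (f a)).unpair.2 by
    fun_prop).of_eq fun a => by simp [encode_rat_eq_pair]

@[fun_prop]
theorem computablePred_rat_lt (hf : Computable f) (hg : Computable g) :
    ComputablePred fun a => f a < g a :=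
  (show ComputablePred fun a => (f a).num * ((g a).den : ℤ) < (g a).num * ((f a).den : ℤ) by
    fun_prop).of_eq fun _ => (Rat.lt_iff _ _).symm

@[fun_prop]
theorem computablePred_rat_le (hf : Computable f) (hg : Computable g) :
    ComputablePred fun a => f a ≤ g a :=
  (computablePred_rat_lt hg hf).not.of_eq fun _ => not_lt

theorem computable_rat_of_mul_eq {num : α → ℤ} {den : α → ℕ} (hnum : Computable num)
    (hden : Computable den) (hden0 : ∀ a, den a ≠ 0) (hf : ∀ a, f a * den a = num a) :
    Computable f := by
  have hgraph : ComputablePred fun x : α × ℚ =>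
    x.2.num * (den x.1 : ℤ) = num x.1 * (x.2.den : ℤ) := by fun_prop
  refine computable_of_computablePred_graph (hgraph.of_eq fun x => ?_)
  have hden : (den x.1 : ℚ) ≠ 0 := Nat.cast_ne_zero.2 (hden0 x.1)
  have hxden : (x.2.den : ℚ) ≠ 0 := Nat.cast_ne_zero.2 x.2.den_ne_zero
  rw [← @Int.cast_inj ℚ]
  push_cast
  rw [← hf, ← Rat.mul_den_eq_num x.2, mul_right_comm, mul_left_inj' hxden, mul_left_inj' hden,
    eq_comm]

@[fun_prop]
theorem computable_rat_add (hf : Computable f) (hg : Computable g) :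
    Computable fun a => f a + g a := by
  refine computable_rat_of_mul_eq
    (num := fun a => (f a).num * ((g a).den : ℤ) + (g a).num * ((f a).den : ℤ))
    (den := fun a => (f a).den * (g a).den) (by fun_prop) (by fun_prop) (by simp) fun a => ?_
  push_cast
  linear_combination (g a).den * Rat.mul_den_eq_num (f a) + (f a).den * Rat.mul_den_eq_num (g a)

@[fun_prop]
theorem computable_rat_mul (hf : Computable f) (hg : Computable g) :
    Computable fun a => f a * g a := by
  refine computable_rat_of_mul_eq (num := fun a => (f a).num * (g a).num)
    (den := fun a => (f a).den * (g a).den) (by fun_prop) (by fun_prop) (by simp) fun a => ?_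
  push_cast
  rw [← Rat.mul_den_eq_num (f a), ← Rat.mul_den_eq_num (g a)]
  ring

@[fun_prop]
theorem computable_rat_natCast {n : α → ℕ} (hn : Computable n) : Computable fun a => (n a : ℚ) :=
  computable_rat_of_mul_eq (num := fun a => (n a : ℤ)) (den := fun _ => 1) (by fun_prop)
    (by fun_prop) (by simp) (by simp)

@[fun_prop]
theorem computable_rat_sub (hf : Computable f) (hg : Computable g) :
    Computable fun a => f a - g a :=
  (show Computable fun a => f a + -1 * g a by fun_prop).of_eq fun a => by ring

@[fun_prop]
theorem computable_rat_pow {n : α → ℕ} (hf : Computable f) (hn : Computable n) :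
    Computable fun a => f a ^ n a := by
  refine (computable_nat_rec (step := fun a _ q => q * f a) hn (Computable.const 1)
    (by fun_prop)).of_eq fun a => ?_
  induction n a with
  | zero => simp
  | succ n ih => simp only [ih, pow_succ]

@[fun_prop]
theorem computable_rat_max (hf : Computable f) (hg : Computable g) :
    Computable fun a => max (f a) (g a) :=
  (show Computable fun a => if f a ≤ g a then g a else f a by fun_prop).of_eq fun _ =>
    (max_def _ _).symm

@[fun_prop]
theorem computable_rat_abs (hf : Computable f) : Computable fun a => |f a| :=
  (show Computable fun a => max (f a) (0 - f a) by fun_prop).of_eq fun _ => by simp [abs]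

theorem computable_rat_sum_range {F : α → ℕ → ℚ} {N : α → ℕ}
    (hF : Computable fun x : α × ℕ => F x.1 x.2) (hN : Computable N) :
    Computable fun a => ∑ k ∈ Finset.range (N a), F a k := by
  have hstep : Computable fun x : α × ℕ × ℚ => x.2.2 + F x.1 x.2.1 :=
    computable_rat_add (by fun_prop)
      (hF.comp (g := fun x : α × ℕ × ℚ => (x.1, x.2.1)) (by fun_prop))
  refine (computable_nat_rec (step := fun a k q => q + F a k) hN (Computable.const 0)
    hstep).of_eq fun a => ?_
  induction N a with
  | zero => simp
  | succ n ih => simp only [ih, Finset.sum_range_succ]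

end ComputableRat

section ComputableNets

/-- The point of `ℝ²` with the given rational coordinates. -/
def ratPoint (p : ℚ × ℚ) : ℝ × ℝ :=
  (p.1, p.2)

/-- The sup distance of `ℝ²` on rational points, with its rational value, so that it can be
computed. -/
def ratDist (p q : ℚ × ℚ) : ℚ :=
  max |p.1 - q.1| |p.2 - q.2|

theorem dist_ratPoint (p q : ℚ × ℚ) : dist (ratPoint p) (ratPoint q) = ratDist p q := by
  simp [ratPoint, ratDist, Prod.dist_eq, Real.dist_eq]

theorem mem_ballOfCode_iff {z : ℝ × ℝ} {c : (ℚ × ℚ) × ℚ} :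
    z ∈ ballOfCode c ↔ dist z (ratPoint c.1) < c.2 :=
  Iff.rfl

theorem ratPoint_mem_ballOfCode_iff {p : ℚ × ℚ} {c : (ℚ × ℚ) × ℚ} :
    ratPoint p ∈ ballOfCode c ↔ ratDist p c.1 < c.2 := by
  rw [mem_ballOfCode_iff, dist_ratPoint, Rat.cast_lt]

theorem exists_ratPoint_dist_lt (z : ℝ × ℝ) {r : ℝ} (hr : 0 < r) :
    ∃ p, dist z (ratPoint p) < r :=
  ((Rat.denseRange_cast (𝕜 := ℝ)).prodMap Rat.denseRange_cast).exists_dist_lt z hr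

@[fun_prop]
theorem computable_ratDist {α : Type*} [Primcodable α] {f g : α → ℚ × ℚ} (hf : Computable f)
    (hg : Computable g) : Computable fun a => ratDist (f a) (g a) := by
  unfold ratDist
  fun_prop

/-- The finite sets `{D t k | k < N t}` of rational points form a computable sequence whose
`t`-th member is within Hausdorff distance `ε t` of `K`, where `ε → 0` is computable too. -/
structure IsComputableNet (K : Set (ℝ × ℝ)) (D : ℕ → ℕ → ℚ × ℚ) (N : ℕ → ℕ) (ε : ℕ → ℚ) :
    Prop where
  computable_point : Computable fun x : ℕ × ℕ => D x.1 x.2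
  computable_card : Computable N
  computable_error : Computable ε
  tendsto_error : Tendsto (fun t => (ε t : ℝ)) atTop (𝓝 0)
  exists_mem_near : ∀ t, ∀ k < N t, ∃ z ∈ K, dist z (ratPoint (D t k)) ≤ ε t
  exists_index_near : ∀ t, ∀ z ∈ K, ∃ k < N t, dist z (ratPoint (D t k)) ≤ ε t

namespace IsComputableNet

variable {K : Set (ℝ × ℝ)} {D : ℕ → ℕ → ℚ × ℚ} {N : ℕ → ℕ} {ε : ℕ → ℚ}

theorem computable_ratDist_center (h : IsComputableNet K D N ε) :
    Computable fun x : (((ℚ × ℚ) × ℚ) × ℕ) × ℕ => ratDist (D x.1.2 x.2) x.1.1.1 :=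
  computable_ratDist (h.computable_point.comp
    (g := fun x : (((ℚ × ℚ) × ℚ) × ℕ) × ℕ => (x.1.2, x.2)) (by fun_prop)) (by fun_prop)

theorem exists_error_lt (h : IsComputableNet K D N ε) {r : ℝ} (hr : 0 < r) : ∃ t, (ε t : ℝ) < r :=
  (h.tendsto_error.eventually_lt_const hr).exists

theorem inter_ballOfCode_nonempty_iff (h : IsComputableNet K D N ε) (c : (ℚ × ℚ) × ℚ) :
    (K ∩ ballOfCode c).Nonempty ↔ ∃ t, ∃ k < N t, ratDist (D t k) c.1 + ε t < c.2 := by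
  constructor
  · rintro ⟨z, hzK, hzc⟩
    rw [mem_ballOfCode_iff] at hzc
    obtain ⟨t, ht⟩ := h.exists_error_lt (half_pos (sub_pos.2 hzc))
    obtain ⟨k, hk, hzk⟩ := h.exists_index_near t z hzK
    refine ⟨t, k, hk, ?_⟩
    rw [← Rat.cast_lt (K := ℝ), Rat.cast_add, ← dist_ratPoint]
    linarith [dist_triangle_left (ratPoint (D t k)) (ratPoint c.1) z]
  · rintro ⟨t, k, hk, hlt⟩
    rw [← Rat.cast_lt (K := ℝ), Rat.cast_add, ← dist_ratPoint] at hlt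
    obtain ⟨z, hzK, hzk⟩ := h.exists_mem_near t k hk
    refine ⟨z, hzK, mem_ballOfCode_iff.2 ?_⟩
    linarith [dist_triangle z (ratPoint (D t k)) (ratPoint c.1)]

theorem isCEClosed (h : IsComputableNet K D N ε) : IsCEClosed K := by
  have hN := h.computable_card
  have hε := h.computable_error
  have hdist := h.computable_ratDist_center
  have htest : ComputablePred fun x : ((ℚ × ℚ) × ℚ) × ℕ =>
      ∃ k < N x.2, ratDist (D x.2 k) x.1.1 + ε x.2 < x.1.2 :=
    computablePred_exists_lt (by fun_prop) (by fun_prop)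
  exact (rePred_exists htest).of_eq fun c => (h.inter_ballOfCode_nonempty_iff c).symm

theorem notMem_ballOfCode_of_mem (h : IsComputableNet K D N ε) {c : (ℚ × ℚ) × ℚ} {t : ℕ}
    (ht : ∀ k < N t, c.2 + ε t < ratDist (D t k) c.1) {z : ℝ × ℝ} (hz : z ∈ K) :
    z ∉ ballOfCode c := by
  obtain ⟨k, hk, hzk⟩ := h.exists_index_near t z hz
  have hfar := ht k hk
  rw [← Rat.cast_lt (K := ℝ), Rat.cast_add, ← dist_ratPoint] at hfar
  rw [mem_ballOfCode_iff]
  linarith [dist_triangle_left (ratPoint (D t k)) (ratPoint c.1) z]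

theorem exists_mem_ballOfCode_of_notMem (h : IsComputableNet K D N ε) (hK : IsClosed K)
    {z : ℝ × ℝ} (hz : z ∉ K) :
    ∃ c : (ℚ × ℚ) × ℚ, (∃ t, ∀ k < N t, c.2 + ε t < ratDist (D t k) c.1) ∧ z ∈ ballOfCode c := by
  obtain ⟨δ, hδ, hball⟩ := Metric.isOpen_iff.1 hK.isOpen_compl z hz
  obtain ⟨r, hr0, hrδ⟩ := exists_rat_btwn (show (0 : ℝ) < δ / 4 by positivity)
  obtain ⟨p, hp⟩ := exists_ratPoint_dist_lt z hr0
  obtain ⟨t, ht⟩ := h.exists_error_lt (show 0 < δ / 4 by positivity)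
  refine ⟨(p, r), ⟨t, fun k hk => ?_⟩, hp⟩
  obtain ⟨w, hwK, hwk⟩ := h.exists_mem_near t k hk
  have hzw : δ ≤ dist w z := not_lt.1 fun hlt => hball hlt hwK
  rw [← Rat.cast_lt (K := ℝ), Rat.cast_add, ← dist_ratPoint]
  linarith [dist_triangle4_right w z (ratPoint (D t k)) (ratPoint p),
    dist_comm (ratPoint p) (ratPoint (D t k))]

theorem isPi01Closed (h : IsComputableNet K D N ε) (hK : IsClosed K) : IsPi01Closed K := by
  have hN := h.computable_card
  have hε := h.computable_error
  have hdist := h.computable_ratDist_center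
  have htest : ComputablePred fun x : ((ℚ × ℚ) × ℚ) × ℕ =>
      ∀ k < N x.2, x.1.2 + ε x.2 < ratDist (D x.2 k) x.1.1 :=
    computablePred_forall_lt (by fun_prop) (by fun_prop)
  refine ⟨fun c => ∃ t, ∀ k < N t, c.2 + ε t < ratDist (D t k) c.1, rePred_exists htest, ?_⟩
  ext z
  simp only [Set.mem_sdiff, mem_univ, true_and, mem_iUnion, mem_ofPred_eq, not_exists]
  refine ⟨fun hz c ⟨t, ht⟩ => h.notMem_ballOfCode_of_mem ht hz, fun hz => ?_⟩
  by_contra hzK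
  obtain ⟨c, hc, hzc⟩ := h.exists_mem_ballOfCode_of_notMem hK hzK
  exact hz c hc hzc

theorem isComputableClosed (h : IsComputableNet K D N ε) (hK : IsClosed K) :
    IsComputableClosed K :=
  ⟨h.isPi01Closed hK, h.isCEClosed⟩

end IsComputableNet

end ComputableNets

section UniversalEnumeration

open Nat.Partrec

/-- The `n`-th partial recursive function halts on the code of `a` within `k` steps. As `n` varies,
the sets `{a | ∃ k, HaltsWithin n k a}` run through all c.e. subsets of `α`. -/
def HaltsWithin {α : Type*} [Primcodable α] (n k : ℕ) (a : α) : Prop :=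
  ((Denumerable.ofNat Code n).evaln k (Encodable.encode a)).isSome

variable {α β : Type*} [Primcodable α] [Primcodable β]

@[fun_prop]
theorem computablePred_haltsWithin {n k : β → ℕ} {a : β → α} (hn : Computable n)
    (hk : Computable k) (ha : Computable a) :
    ComputablePred fun b => HaltsWithin (n b) (k b) (a b) := by
  have hcode : Computable (Denumerable.ofNat Code) := Computable.ofNat Code
  have hevaln : Computable fun b =>
      (Denumerable.ofNat Code (n b)).evaln (k b) (Encodable.encode (a b)) :=
    Code.primrec_evaln.to_comp.comp ((hk.pair (hcode.comp hn)).pair (Computable.encode.comp ha))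
  exact computablePred_eq (Primrec.option_isSome.to_comp.comp hevaln) (Computable.const true)

theorem HaltsWithin.mono {n k l : ℕ} {a : α} (h : HaltsWithin n k a) (hkl : k ≤ l) :
    HaltsWithin n l a := by
  obtain ⟨x, hx⟩ := Option.isSome_iff_exists.1 h
  exact Option.isSome_iff_exists.2 ⟨x, Code.evaln_mono hkl hx⟩

theorem exists_forall_iff_haltsWithin {W : α → Prop} (hW : REPred W) :
    ∃ n, ∀ a, W a ↔ ∃ k, HaltsWithin n k a := by
  obtain ⟨c, hc⟩ := Code.exists_code.1 hW
  refine ⟨Encodable.encode c, fun a => ?_⟩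
  have hdom : W a ↔ (c.eval (Encodable.encode a)).Dom := by
    rw [hc]
    simp [Part.assert]
  simp only [hdom, HaltsWithin, Denumerable.ofNat_encode, Part.dom_iff_mem, Code.evaln_complete,
    Option.isSome_iff_exists, Option.mem_def]
  exact exists_comm

/-- A computable sequence in which every element of the type recurs infinitely often. -/
def revisit (α : Type*) [Primcodable α] [Inhabited α] (s : ℕ) : α :=
  (Encodable.decode (α := α) s.unpair.1).getD default

@[fun_prop]
theorem computable_revisit [Inhabited α] : Computable (revisit α) :=
  Computable.option_getD (Computable.decode.comp (by fun_prop)) (by fun_prop)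

theorem exists_revisit_eq [Inhabited α] (a : α) (m : ℕ) : ∃ s ≥ m, revisit α s = a :=
  ⟨Nat.pair (Encodable.encode a) m, Nat.right_le_pair _ _, by simp [revisit]⟩

-- Otherwise unification tries to compute with the decoder.
attribute [irreducible] revisit

end UniversalEnumeration

section PlanarConnectedness

variable {Y : Type*}

theorem Icc_subset_image_fst_of_hausdorffDist_lt [PseudoMetricSpace Y] {B K : Set (ℝ × Y)}
    {r : ℝ} (hB : IsPreconnected B) (hfin : hausdorffEDist B K ≠ ⊤) (hBK : hausdorffDist B K < r)
    {a b : ℝ × Y} (ha : a ∈ K) (hb : b ∈ K) : Icc (a.1 + r) (b.1 - r) ⊆ Prod.fst '' B := by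
  obtain ⟨a', ha', hdista⟩ := exists_dist_lt_of_hausdorffDist_lt' ha hBK hfin
  obtain ⟨b', hb', hdistb⟩ := exists_dist_lt_of_hausdorffDist_lt' hb hBK hfin
  have hadiff := abs_lt.1 ((le_max_left _ _).trans_lt hdista)
  have hbdiff := abs_lt.1 ((le_max_left _ _).trans_lt hdistb)
  have hproj : IsPreconnected (Prod.fst '' B) := hB.image _ continuous_fst.continuousOn
  intro x hx
  exact hproj.Icc_subset (mem_image_of_mem _ ha') (mem_image_of_mem _ hb')
    ⟨by linarith [hx.1, hadiff.2], by linarith [hx.2, hbdiff.1]⟩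

theorem not_locallyConnectedSpace_of_tendsto_of_frequently_gap [TopologicalSpace Y]
    {B U : Set (ℝ × Y)} {u : ℕ → ℝ × Y} {p : ℝ × Y} (hu : ∀ᶠ i in atTop, u i ∈ B) (hp : p ∈ B)
    (hup : Tendsto u atTop (𝓝 p)) (hU : U ∈ 𝓝 p)
    (hgap : ∃ᶠ i in atTop, ∃ m ∈ Icc (u (i + 1)).1 (u i).1, ∀ z ∈ B ∩ U, z.1 ≠ m) :
    ¬ LocallyConnectedSpace B := by
  intro hlc
  obtain ⟨V, hVU, hVopen, hpV, hVconn⟩ :=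
    locallyConnectedSpace_iff_subsets_isOpen_isConnected.1 hlc ⟨p, hp⟩ (Subtype.val ⁻¹' U)
      (continuous_subtype_val.continuousAt.preimage_mem_nhds hU)
  obtain ⟨O, hO, rfl⟩ := isOpen_induced_iff.1 hVopen
  have hOu : ∀ᶠ i in atTop, u i ∈ B ∧ u i ∈ O :=
    hu.and (hup.eventually (hO.mem_nhds hpV))
  have hOu_succ := (tendsto_add_atTop_nat 1).eventually hOu
  obtain ⟨i, ⟨m, hm, hmgap⟩, hi, hi_succ⟩ := (hgap.and_eventually (hOu.and hOu_succ)).exists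
  have hproj : IsPreconnected ((fun z : B => z.1.1) '' (Subtype.val ⁻¹' O)) :=
    hVconn.isPreconnected.image _ (by fun_prop)
  obtain ⟨z, hzO, hzm⟩ :=
    hproj.Icc_subset ⟨⟨_, hi_succ.1⟩, hi_succ.2, rfl⟩ ⟨⟨_, hi.1⟩, hi.2, rfl⟩ hm
  exact hmgap z ⟨z.2, hVU hzO⟩ hzm

end PlanarConnectedness

section Combs

open scoped unitInterval

/-- The comb with backbone the graph of `f` over `[0,1]` and with a tooth `{x} × [0,1]` at each
`x ∈ C ∩ [0,1]`. -/
def comb (f : ℝ → ℝ) (C : Set ℝ) : Set (ℝ × ℝ) :=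
  {z | z.1 ∈ I ∧ (z.2 = f z.1 ∨ z.1 ∈ C ∧ z.2 ∈ I)}

variable {f : ℝ → ℝ} {C : Set ℝ}

theorem mk_apply_mem_comb {x : ℝ} (hx : x ∈ I) : (x, f x) ∈ comb f C :=
  ⟨hx, Or.inl rfl⟩

theorem comb_subset_unit_square (hf01 : ∀ x, f x ∈ I) : comb f C ⊆ I ×ˢ I := by
  rintro ⟨x, y⟩ ⟨hx, hy | ⟨-, hy⟩⟩
  · exact ⟨hx, hy ▸ hf01 x⟩
  · exact ⟨hx, hy⟩

theorem isClosed_comb (hf : Continuous f) (hC : IsClosed C) : IsClosed (comb f C) :=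
  (isClosed_Icc.preimage continuous_fst).inter <|
    (isClosed_eq continuous_snd (hf.comp continuous_fst)).union <|
      (hC.preimage continuous_fst).inter (isClosed_Icc.preimage continuous_snd)

theorem mk_lineMap_mem_comb (hf01 : ∀ x, f x ∈ I) {z : ℝ × ℝ} (hz : z ∈ comb f C) (t : I) :
    (z.1, AffineMap.lineMap z.2 (f z.1) (t : ℝ)) ∈ comb f C := by
  obtain ⟨hx, hy | ⟨hxC, hy⟩⟩ := hz
  · exact ⟨hx, Or.inl (by simp [hy])⟩
  · exact ⟨hx, Or.inr ⟨hxC, (convex_Icc 0 1).lineMap_mem hy (hf01 _) t.2⟩⟩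

theorem mk_lineMap_zero_mem_comb {z : ℝ × ℝ} (hz : z ∈ comb f C) (t : I) :
    (AffineMap.lineMap z.1 0 (t : ℝ), f (AffineMap.lineMap z.1 0 (t : ℝ))) ∈ comb f C :=
  mk_apply_mem_comb ((convex_Icc 0 1).lineMap_mem hz.1 (left_mem_Icc.2 zero_le_one) t.2)

/-- The vertical projection of a comb onto its backbone. -/
def combProj (hf : Continuous f) : C(comb f C, comb f C) where
  toFun z := ⟨(z.1.1, f z.1.1), mk_apply_mem_comb z.2.1⟩

theorem id_homotopic_combProj (hf : Continuous f) (hf01 : ∀ x, f x ∈ I) :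
    (ContinuousMap.id (comb f C)).Homotopic (combProj hf) := by
  refine ⟨⟨⟨fun p => ⟨_, mk_lineMap_mem_comb hf01 p.2.2 p.1⟩, ?_⟩, fun z => ?_, fun z => ?_⟩⟩
  · simp only [AffineMap.lineMap_apply]
    fun_prop
  · simp
  · simp [combProj]

theorem combProj_nullhomotopic (hf : Continuous f) :
    (combProj hf : C(comb f C, comb f C)).Nullhomotopic := by
  refine ⟨⟨(0, f 0), mk_apply_mem_comb (left_mem_Icc.2 zero_le_one)⟩,
    ⟨⟨⟨fun p => ⟨_, mk_lineMap_zero_mem_comb p.2.2 p.1⟩, ?_⟩, fun z => ?_, fun z => ?_⟩⟩⟩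
  · simp only [AffineMap.lineMap_apply]
    fun_prop
  · simp [combProj]
  · simp

theorem contractibleSpace_comb (hf : Continuous f) (hf01 : ∀ x, f x ∈ I) :
    ContractibleSpace (comb f C) := by
  obtain ⟨z, hz⟩ := combProj_nullhomotopic (C := C) hf
  exact contractible_iff_id_nullhomotopic _ |>.2 ⟨z, (id_homotopic_combProj hf hf01).trans hz⟩

theorem mk_apply_mem_of_hausdorffDist_comb_lt (hf01 : ∀ x, f x ∈ I) {B : Set (ℝ × ℝ)}
    (hBK : B ⊆ comb f C) (hB : IsConnected B) {r : ℝ} (hd : hausdorffDist B (comb f C) < r)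
    {x : ℝ} (hx : x ∈ Icc r (1 - r)) (hxC : x ∉ C) : (x, f x) ∈ B := by
  have hbdd : Bornology.IsBounded (comb f C) :=
    (isCompact_Icc.prod isCompact_Icc).isBounded.subset (comb_subset_unit_square hf01)
  have h0 : (0, f 0) ∈ comb f C := mk_apply_mem_comb (left_mem_Icc.2 zero_le_one)
  have h1 : (1, f 1) ∈ comb f C := mk_apply_mem_comb (right_mem_Icc.2 zero_le_one)
  have hfin := hausdorffEDist_ne_top_of_nonempty_of_bounded hB.nonempty ⟨_, h0⟩
    (hbdd.subset hBK) hbdd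
  obtain ⟨z, hzB, rfl⟩ :=
    Icc_subset_image_fst_of_hausdorffDist_lt hB.isPreconnected hfin hd h0 h1 (by simpa using hx)
  obtain ⟨-, hz | ⟨hzC, -⟩⟩ := hBK hzB
  · rwa [← hz]
  · exact absurd hzC hxC

end Combs

section Teeth

/-- The abscissa `1/2 + 2⁻ⁱ⁻²` of the `i`-th tooth; the teeth accumulate at `1/2` from the right. -/
def toothPos (i : ℕ) : ℚ :=
  1 / 2 + (1 / 2) ^ (i + 2)

/-- The abscissas of all teeth, including the limit tooth at `1/2`. -/
def toothSet : Set ℝ :=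
  insert (1 / 2) (range fun i => (toothPos i : ℝ))

theorem half_pow_succ (n : ℕ) : (1 / 2 : ℝ) ^ (n + 1) = (1 / 2) ^ n / 2 := by
  ring

theorem half_pow_pos (n : ℕ) : 0 < (1 / 2 : ℝ) ^ n := by
  positivity

theorem half_pow_le_half_pow {m n : ℕ} (h : m ≤ n) : (1 / 2 : ℝ) ^ n ≤ (1 / 2) ^ m :=
  pow_le_pow_of_le_one (by norm_num) (by norm_num) h

theorem cast_toothPos (i : ℕ) : (toothPos i : ℝ) = 1 / 2 + (1 / 2) ^ (i + 2) := by
  simp [toothPos]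

@[fun_prop]
theorem computable_toothPos {α : Type*} [Primcodable α] {f : α → ℕ} (hf : Computable f) :
    Computable fun a => toothPos (f a) := by
  unfold toothPos
  fun_prop

theorem half_lt_toothPos (i : ℕ) : (1 / 2 : ℝ) < toothPos i := by
  linarith [cast_toothPos i, half_pow_pos (i + 2)]

theorem toothPos_le_three_quarters (i : ℕ) : (toothPos i : ℝ) ≤ 3 / 4 := by
  linarith [cast_toothPos i, half_pow_le_half_pow (show 2 ≤ i + 2 by omega)]

theorem toothPos_le_toothPos {i j : ℕ} (h : i ≤ j) : (toothPos j : ℝ) ≤ toothPos i := by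
  linarith [cast_toothPos i, cast_toothPos j, half_pow_le_half_pow (show i + 2 ≤ j + 2 by omega)]

theorem tendsto_toothPos : Tendsto (fun i => (toothPos i : ℝ)) atTop (𝓝 (1 / 2)) := by
  have hpow : Tendsto (fun n : ℕ => (1 / 2 : ℝ) ^ n) atTop (𝓝 0) :=
    tendsto_pow_atTop_nhds_zero_of_lt_one (by norm_num) (by norm_num)
  simpa only [cast_toothPos, add_zero, Function.comp_apply] using
    (hpow.comp (tendsto_add_atTop_nat 2)).const_add (1 / 2)

theorem isClosed_toothSet : IsClosed toothSet :=
  tendsto_toothPos.isCompact_insert_range.isClosed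

theorem toothPos_mem_toothSet (i : ℕ) : (toothPos i : ℝ) ∈ toothSet :=
  mem_insert_of_mem _ (mem_range_self i)

theorem toothSet_subset : toothSet ⊆ Icc (1 / 2) (3 / 4) := by
  rintro _ (rfl | ⟨i, rfl⟩)
  · norm_num
  · exact ⟨(half_lt_toothPos i).le, toothPos_le_three_quarters i⟩

theorem exists_le_abs_sub_toothPos_le (t : ℕ) {x : ℝ} (hx : x ∈ toothSet) :
    ∃ j ≤ t, |x - toothPos j| ≤ (1 / 2) ^ (t + 2) := by
  have hlimit {x : ℝ} (hx : x ∈ Icc (1 / 2 : ℝ) (toothPos t)) :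
      |x - toothPos t| ≤ (1 / 2) ^ (t + 2) := by
    rw [abs_sub_comm, abs_of_nonneg (sub_nonneg.2 hx.2)]
    linarith [hx.1, cast_toothPos t]
  rcases hx with rfl | ⟨i, rfl⟩
  · exact ⟨t, le_rfl, hlimit ⟨le_rfl, (half_lt_toothPos t).le⟩⟩
  · rcases le_total i t with hit | hit
    · exact ⟨i, hit, by simp⟩
    · exact ⟨t, le_rfl, hlimit ⟨(half_lt_toothPos i).le, toothPos_le_toothPos hit⟩⟩

/-- A point strictly between the teeth `j + 1` and `j`, to the right of all bumps attached to the
tooth `j + 1`. -/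
def gapPos (j : ℕ) : ℚ :=
  toothPos (j + 1) + (1 / 2) ^ (j + 4)

theorem cast_gapPos (j : ℕ) : (gapPos j : ℝ) = toothPos (j + 1) + (1 / 2) ^ (j + 4) := by
  simp [gapPos]

theorem toothPos_succ_lt_gapPos (j : ℕ) : (toothPos (j + 1) : ℝ) < gapPos j := by
  linarith [cast_gapPos j, half_pow_pos (j + 4)]

theorem gapPos_lt_toothPos (j : ℕ) : (gapPos j : ℝ) < toothPos j := by
  linarith [cast_gapPos j, cast_toothPos j, cast_toothPos (j + 1), half_pow_succ (j + 2),
    half_pow_succ (j + 3), half_pow_pos (j + 2)]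

theorem gapPos_notMem_toothSet (j : ℕ) : (gapPos j : ℝ) ∉ toothSet := by
  rintro (h | ⟨i, h : (toothPos i : ℝ) = gapPos j⟩)
  · linarith [half_lt_toothPos (j + 1), toothPos_succ_lt_gapPos j]
  · rcases le_or_gt i j with hij | hij
    · linarith [toothPos_le_toothPos hij, gapPos_lt_toothPos j]
    · linarith [toothPos_le_toothPos (Nat.succ_le_of_lt hij), toothPos_succ_lt_gapPos j]

theorem notMem_Ioo_toothPos_of_mem_Icc_gapPos {i j : ℕ} {x : ℝ}
    (hx : x ∈ Icc (gapPos j : ℝ) (toothPos j)) :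
    x ∉ Ioo (toothPos i : ℝ) (toothPos i + (1 / 2) ^ (i + 3)) := by
  rintro ⟨hlt, hgt⟩
  rcases le_or_gt i j with hij | hij
  · linarith [toothPos_le_toothPos hij, hx.2]
  · linarith [hx.1, cast_gapPos j, toothPos_le_toothPos (Nat.succ_le_of_lt hij),
      half_pow_le_half_pow (show j + 4 ≤ i + 3 by omega)]

end Teeth

/-- The data of a backbone function `∑ₛ height s • hat s`, where the hat function `hat s` is
supported on an interval of length `2⁻ˢ⁻³` immediately to the right of the tooth `tooth s`. -/
structure BumpScheme where
  height : ℕ → ℚ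
  tooth : ℕ → ℕ
  height_nonneg : ∀ s, 0 ≤ height s
  sum_height_le_one : ∀ F : Finset ℕ, ∑ s ∈ F, height s ≤ 1
  tooth_le : ∀ s, height s ≠ 0 → tooth s ≤ s

namespace BumpScheme

section Profile

variable (S : BumpScheme) {𝕜 : Type*} [Field 𝕜] [LinearOrder 𝕜] [IsStrictOrderedRing 𝕜]

/-- The peak of the `s`-th bump. -/
def peak (s : ℕ) : ℚ :=
  toothPos (S.tooth s) + (1 / 2) ^ (s + 4)

/-- The `s`-th bump, over any ordered field: it is computed over `ℚ` and summed over `ℝ`. -/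
def bump (s : ℕ) (x : 𝕜) : 𝕜 :=
  S.height s * max (1 - 2 ^ (s + 4) * |x - S.peak s|) 0

/-- The sum of the first `t` bumps. -/
def partialProfile (t : ℕ) (x : 𝕜) : 𝕜 :=
  ∑ s ∈ Finset.range t, S.bump s x

/-- The backbone function, the sum of all bumps. -/
noncomputable def profile (x : ℝ) : ℝ :=
  ∑' s, S.bump s x

theorem cast_bump (s : ℕ) (q : ℚ) : ((S.bump s q : ℚ) : 𝕜) = S.bump s (q : 𝕜) := by
  simp [bump]

theorem cast_partialProfile (t : ℕ) (q : ℚ) :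
    ((S.partialProfile t q : ℚ) : 𝕜) = S.partialProfile t (q : 𝕜) := by
  simp [partialProfile, cast_bump]

theorem cast_peak (s : ℕ) : (S.peak s : ℝ) = toothPos (S.tooth s) + (1 / 2) ^ (s + 4) := by
  simp [peak]

theorem cast_height_nonneg (s : ℕ) : 0 ≤ (S.height s : 𝕜) :=
  Rat.cast_nonneg.2 (S.height_nonneg s)

theorem sum_cast_height_le_one (F : Finset ℕ) : ∑ s ∈ F, (S.height s : 𝕜) ≤ 1 :=
  mod_cast S.sum_height_le_one F

theorem bump_nonneg (s : ℕ) (x : 𝕜) : 0 ≤ S.bump s x :=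
  mul_nonneg (S.cast_height_nonneg s) (le_max_right _ _)

theorem bump_le_height (s : ℕ) (x : 𝕜) : S.bump s x ≤ S.height s :=
  mul_le_of_le_one_right (S.cast_height_nonneg s)
    (max_le (sub_le_self _ (by positivity)) zero_le_one)

theorem bump_peak (s : ℕ) : S.bump s (S.peak s : 𝕜) = S.height s := by
  simp [bump]

theorem abs_bump_sub_bump_le (s : ℕ) (x y : 𝕜) :
    |S.bump s x - S.bump s y| ≤ S.height s * (2 ^ (s + 4) * |x - y|) := by
  rw [bump, bump, ← mul_sub, abs_mul, abs_of_nonneg (S.cast_height_nonneg s)]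
  refine mul_le_mul_of_nonneg_left ?_ (S.cast_height_nonneg s)
  calc _ ≤ |1 - 2 ^ (s + 4) * |x - S.peak s| - (1 - 2 ^ (s + 4) * |y - S.peak s|)| :=
        abs_max_sub_max_le_abs _ _ _
    _ = 2 ^ (s + 4) * |(|y - S.peak s| - |x - S.peak s|)| := by
        rw [sub_sub_sub_cancel_left, ← mul_sub, abs_mul, abs_of_pos (by positivity)]
    _ ≤ 2 ^ (s + 4) * |x - y| := by
        gcongr 2 ^ (s + 4) * ?_
        simpa [abs_sub_comm y x] using abs_abs_sub_abs_le (y - S.peak s) (x - S.peak s)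

theorem tooth_le_and_mem_Ioo_of_bump_ne_zero {s : ℕ} {x : ℝ} (h : S.bump s x ≠ 0) :
    S.tooth s ≤ s ∧
      x ∈ Ioo (toothPos (S.tooth s) : ℝ) (toothPos (S.tooth s) + (1 / 2) ^ (s + 3)) := by
  obtain ⟨hheight, hhat⟩ := mul_ne_zero_iff.1 h
  have hpos : 2 ^ (s + 4) * |x - S.peak s| < 1 := by
    by_contra! hle
    exact hhat (max_eq_right (sub_nonpos.2 hle))
  have hdist : |x - S.peak s| < (1 / 2) ^ (s + 4) := by
    rwa [one_div_pow, lt_div_iff₀' (by positivity)]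
  rw [abs_lt, cast_peak] at hdist
  exact ⟨S.tooth_le s (mod_cast hheight),
    by linarith [hdist.1], by linarith [hdist.2, half_pow_succ (s + 3)]⟩

theorem summable_height : Summable fun s => (S.height s : ℝ) :=
  summable_of_sum_le S.cast_height_nonneg S.sum_cast_height_le_one

theorem summable_bump (x : ℝ) : Summable fun s => S.bump s x :=
  S.summable_height.of_nonneg_of_le (S.bump_nonneg · x) (S.bump_le_height · x)

theorem continuous_profile : Continuous S.profile := by
  refine continuous_tsum (fun s => ?_) S.summable_height fun s x => ?_
  · unfold bump
    fun_prop
  · rw [Real.norm_of_nonneg (S.bump_nonneg s x)]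
    exact S.bump_le_height s x

theorem sum_bump_le_one (F : Finset ℕ) (x : 𝕜) : ∑ s ∈ F, S.bump s x ≤ 1 :=
  (Finset.sum_le_sum fun s _ => S.bump_le_height s x).trans (S.sum_cast_height_le_one F)

theorem profile_mem_Icc (x : ℝ) : S.profile x ∈ Icc (0 : ℝ) 1 :=
  ⟨tsum_nonneg (S.bump_nonneg · x),
    (S.summable_bump x).tsum_le_of_sum_le (S.sum_bump_le_one · x)⟩

theorem partialProfile_mem_Icc (t : ℕ) (x : 𝕜) : S.partialProfile t x ∈ Icc (0 : 𝕜) 1 :=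
  ⟨Finset.sum_nonneg fun s _ => S.bump_nonneg s x, S.sum_bump_le_one _ x⟩

theorem height_le_profile_peak (s : ℕ) : (S.height s : ℝ) ≤ S.profile (S.peak s) :=
  calc (S.height s : ℝ) = S.bump s (S.peak s : ℝ) := (S.bump_peak s).symm
    _ ≤ S.profile (S.peak s) := (S.summable_bump _).le_tsum s fun r _ => S.bump_nonneg r _

theorem abs_partialProfile_sub_le (t : ℕ) (x y : 𝕜) :
    |S.partialProfile t x - S.partialProfile t y| ≤ 2 ^ (t + 4) * |x - y| := by
  calc |S.partialProfile t x - S.partialProfile t y|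
      ≤ ∑ s ∈ Finset.range t, |S.bump s x - S.bump s y| := by
        rw [partialProfile, partialProfile, ← Finset.sum_sub_distrib]
        exact Finset.abs_sum_le_sum_abs _ _
    _ ≤ ∑ s ∈ Finset.range t, S.height s * (2 ^ (t + 4) * |x - y|) := by
        refine Finset.sum_le_sum fun s hs => (S.abs_bump_sub_bump_le s x y).trans ?_
        have hst := (Finset.mem_range.1 hs).le
        have := S.cast_height_nonneg (𝕜 := 𝕜) s
        gcongr
        norm_num
    _ ≤ 2 ^ (t + 4) * |x - y| := by
        rw [← Finset.sum_mul]
        exact mul_le_of_le_one_left (by positivity) (S.sum_cast_height_le_one _)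

theorem profile_eq_partialProfile_or_exists_mem_Ioo (t : ℕ) (x : ℝ) :
    S.profile x = S.partialProfile t x ∨
      ∃ i, x ∈ Ioo (toothPos i : ℝ) (toothPos i + (1 / 2) ^ (t + 3)) := by
  by_cases htail : ∀ s ∉ Finset.range t, S.bump s x = 0
  · exact Or.inl (tsum_eq_sum htail)
  · push Not at htail
    obtain ⟨s, hts, hne⟩ := htail
    obtain ⟨-, hlt, hgt⟩ := S.tooth_le_and_mem_Ioo_of_bump_ne_zero hne
    have hts : t + 3 ≤ s + 3 := by simpa using hts
    exact Or.inr ⟨S.tooth s, hlt, by linarith [half_pow_le_half_pow hts]⟩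

theorem profile_eq_zero_of_mem_Icc_gapPos {j : ℕ} {x : ℝ}
    (hx : x ∈ Icc (gapPos j : ℝ) (toothPos j)) : S.profile x = 0 := by
  have hzero : ∀ s, S.bump s x = 0 := by
    intro s
    by_contra hne
    obtain ⟨hle, hlt, hgt⟩ := S.tooth_le_and_mem_Ioo_of_bump_ne_zero hne
    have hwidth := half_pow_le_half_pow (show S.tooth s + 3 ≤ s + 3 by omega)
    exact notMem_Ioo_toothPos_of_mem_Icc_gapPos hx ⟨hlt, by linarith⟩
  simp [profile, hzero]

theorem profile_toothPos (i : ℕ) : S.profile (toothPos i) = 0 :=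
  S.profile_eq_zero_of_mem_Icc_gapPos (right_mem_Icc.2 (gapPos_lt_toothPos i).le)

theorem profile_gapPos (j : ℕ) : S.profile (gapPos j) = 0 :=
  S.profile_eq_zero_of_mem_Icc_gapPos (left_mem_Icc.2 (gapPos_lt_toothPos j).le)

theorem notMem_toothSet_of_profile_ne_zero {x : ℝ} (hx : 1 / 2 < x) (h : S.profile x ≠ 0) :
    x ∉ toothSet := by
  rintro (rfl | ⟨i, rfl⟩)
  · exact hx.false
  · exact h (S.profile_toothPos i)

theorem not_locallyConnectedSpace_of_forall_toothPos_mem {B : Set (ℝ × ℝ)}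
    (hBK : B ⊆ comb S.profile toothSet) (hB : IsClosed B) {y : ℝ} (hy : 0 < y)
    (hmem : ∀ i, ((toothPos i : ℝ), y) ∈ B) : ¬ LocallyConnectedSpace B := by
  have hlim : Tendsto (fun i => ((toothPos i : ℝ), y)) atTop (𝓝 (1 / 2, y)) :=
    tendsto_toothPos.prodMk_nhds tendsto_const_nhds
  have hupper : {z : ℝ × ℝ | 0 < z.2} ∈ 𝓝 ((1 / 2 : ℝ), y) :=
    (isOpen_lt continuous_const continuous_snd).mem_nhds hy
  refine not_locallyConnectedSpace_of_tendsto_of_frequently_gap (Eventually.of_forall hmem)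
    (hB.mem_of_tendsto hlim (Eventually.of_forall hmem)) hlim hupper
    (Frequently.of_forall fun i => ⟨gapPos i,
      ⟨(toothPos_succ_lt_gapPos i).le, (gapPos_lt_toothPos i).le⟩, ?_⟩)
  rintro z ⟨hzB, hzpos : 0 < z.2⟩ hzgap
  obtain ⟨-, hzprofile | ⟨hztooth, -⟩⟩ := hBK hzB
  · rw [hzgap, S.profile_gapPos] at hzprofile
    exact hzpos.ne' hzprofile
  · exact gapPos_notMem_toothSet i (hzgap ▸ hztooth)

theorem exists_profile_eq (s : ℕ) {y : ℝ} (hy : y ∈ Icc (0 : ℝ) (S.height s)) :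
    ∃ x ∈ Icc (toothPos (S.tooth s) : ℝ) (S.peak s), S.profile x = y := by
  have hle : (toothPos (S.tooth s) : ℝ) ≤ S.peak s := by
    linarith [S.cast_peak s, half_pow_pos (s + 4)]
  refine intermediate_value_Icc hle S.continuous_profile.continuousOn ?_
  rw [profile_toothPos]
  exact ⟨hy.1, hy.2.trans (S.height_le_profile_peak s)⟩

end Profile

section Net

variable (S : BumpScheme)

/-- The number of multiples of `2⁻²ᵗ⁻⁴` in `[0,1]`; this mesh compensates the Lipschitz constant
`2ᵗ⁺⁴` of `partialProfile t`. -/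
def gridSize (t : ℕ) : ℕ :=
  2 ^ (2 * t + 4) + 1

/-- The `r`-th multiple of `2⁻²ᵗ⁻⁴`. -/
def gridPoint (t r : ℕ) : ℚ :=
  r * (1 / 2) ^ (2 * t + 4)

/-- For `j ≤ t` a grid point on the tooth `j`, otherwise a point on the graph of
`partialProfile t`. -/
def netPoint (t j r : ℕ) : ℚ × ℚ :=
  if j ≤ t then (toothPos j, gridPoint t r)
  else (gridPoint t r, S.partialProfile t (gridPoint t r))

theorem gridPoint_mem_Icc {t r : ℕ} (hr : r < gridSize t) :
    (gridPoint t r : ℝ) ∈ Icc (0 : ℝ) 1 := by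
  have hle : (r : ℝ) ≤ 2 ^ (2 * t + 4) := mod_cast Nat.lt_succ_iff.1 hr
  have hcast : (gridPoint t r : ℝ) = r / 2 ^ (2 * t + 4) := by simp [gridPoint, div_eq_mul_inv]
  rw [hcast]
  exact ⟨by positivity, div_le_one_of_le₀ hle (by positivity)⟩

theorem exists_gridPoint_near (t : ℕ) {x : ℝ} (hx : x ∈ Icc (0 : ℝ) 1) :
    ∃ r < gridSize t, |x - gridPoint t r| ≤ (1 / 2) ^ (2 * t + 4) := by
  have hpos : (0 : ℝ) < 2 ^ (2 * t + 4) := by positivity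
  refine ⟨⌊x * 2 ^ (2 * t + 4)⌋₊, Nat.lt_succ_iff.2 (Nat.floor_le_of_le ?_), ?_⟩
  · push_cast
    exact mul_le_of_le_one_left hpos.le hx.2
  · have hfloor := Nat.floor_le (mul_nonneg hx.1 hpos.le)
    have hfloor_lt := Nat.lt_floor_add_one (x * 2 ^ (2 * t + 4))
    have hcast : (gridPoint t ⌊x * 2 ^ (2 * t + 4)⌋₊ : ℝ) =
        ⌊x * 2 ^ (2 * t + 4)⌋₊ / 2 ^ (2 * t + 4) := by simp [gridPoint, div_eq_mul_inv]
    rw [hcast, one_div_pow, le_div_iff₀ hpos, ← abs_of_pos hpos, ← abs_mul, abs_of_pos hpos,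
      sub_mul, div_mul_cancel₀ _ hpos.ne', abs_of_nonneg (by linarith)]
    linarith

theorem dist_ratPoint_le_iff {z : ℝ × ℝ} {p : ℚ × ℚ} {r : ℝ} :
    dist z (ratPoint p) ≤ r ↔ |z.1 - p.1| ≤ r ∧ |z.2 - p.2| ≤ r := by
  simp [Prod.dist_eq, Real.dist_eq, ratPoint]

theorem mk_mem_comb_toothSet {f : ℝ → ℝ} {x y : ℝ} (hx : x ∈ toothSet) (hy : y ∈ Icc (0 : ℝ) 1) :
    (x, y) ∈ comb f toothSet :=
  ⟨⟨by linarith [(toothSet_subset hx).1], by linarith [(toothSet_subset hx).2]⟩, Or.inr ⟨hx, hy⟩⟩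

theorem exists_mem_comb_near_netPoint (t j : ℕ) {r : ℕ} (hr : r < gridSize t) :
    ∃ z ∈ comb S.profile toothSet, dist z (ratPoint (S.netPoint t j r)) ≤ (1 / 2) ^ t := by
  have hgrid := gridPoint_mem_Icc hr
  simp only [dist_ratPoint_le_iff, netPoint]
  split_ifs with hjt
  · exact ⟨(toothPos j, gridPoint t r), mk_mem_comb_toothSet (toothPos_mem_toothSet j) hgrid,
      by simp⟩
  rw [cast_partialProfile]
  rcases S.profile_eq_partialProfile_or_exists_mem_Ioo t (gridPoint t r) with heq | ⟨i, hlt, hgt⟩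
  · exact ⟨_, mk_apply_mem_comb hgrid, by simp [heq]⟩
  · refine ⟨(toothPos i, S.partialProfile t (gridPoint t r : ℝ)),
      mk_mem_comb_toothSet (toothPos_mem_toothSet i) (S.partialProfile_mem_Icc t _), ?_, by simp⟩
    rw [abs_sub_comm, abs_of_pos (sub_pos.2 hlt)]
    linarith [half_pow_le_half_pow (show t ≤ t + 3 by omega)]

theorem exists_netPoint_near_of_near_toothSet {t : ℕ} {x y : ℝ}
    (hx : ∃ c ∈ toothSet, |x - c| ≤ (1 / 2) ^ (t + 3)) (hy : y ∈ Icc (0 : ℝ) 1) :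
    ∃ j < t + 2, ∃ r < gridSize t, dist (x, y) (ratPoint (S.netPoint t j r)) ≤ (1 / 2) ^ t := by
  obtain ⟨c, hc, hxc⟩ := hx
  obtain ⟨j, hjt, hcj⟩ := exists_le_abs_sub_toothPos_le t hc
  obtain ⟨r, hr, hyr⟩ := exists_gridPoint_near t hy
  refine ⟨j, by omega, r, hr, ?_⟩
  simp only [dist_ratPoint_le_iff, netPoint, if_pos hjt]
  refine ⟨?_, hyr.trans (half_pow_le_half_pow (by omega))⟩
  linarith [abs_sub_le x c (toothPos j), half_pow_succ t, half_pow_succ (t + 1),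
    half_pow_succ (t + 2), half_pow_pos t]

theorem exists_netPoint_near_of_profile_eq {t : ℕ} {x : ℝ} (hx : x ∈ Icc (0 : ℝ) 1)
    (heq : S.profile x = S.partialProfile t x) :
    ∃ j < t + 2, ∃ r < gridSize t,
      dist (x, S.profile x) (ratPoint (S.netPoint t j r)) ≤ (1 / 2) ^ t := by
  obtain ⟨r, hr, hxr⟩ := exists_gridPoint_near t hx
  refine ⟨t + 1, by omega, r, hr, ?_⟩
  simp only [dist_ratPoint_le_iff, netPoint, if_neg t.lt_succ_self.not_ge, cast_partialProfile, heq]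
  refine ⟨hxr.trans (half_pow_le_half_pow (by omega)), ?_⟩
  calc |S.partialProfile t x - S.partialProfile t (gridPoint t r : ℝ)|
      ≤ 2 ^ (t + 4) * |x - gridPoint t r| := S.abs_partialProfile_sub_le t _ _
    _ ≤ 2 ^ (t + 4) * (1 / 2) ^ (2 * t + 4) := by gcongr
    _ = (1 / 2) ^ t := by
        rw [show 2 * t + 4 = t + 4 + t by omega, pow_add _ (t + 4) t, ← mul_assoc, ← mul_pow]
        norm_num

theorem exists_netPoint_near (t : ℕ) {z : ℝ × ℝ} (hz : z ∈ comb S.profile toothSet) :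
    ∃ j < t + 2, ∃ r < gridSize t, dist z (ratPoint (S.netPoint t j r)) ≤ (1 / 2) ^ t := by
  obtain ⟨x, y⟩ := z
  obtain ⟨hx, hy | ⟨hxC, hy⟩⟩ := hz
  · obtain rfl : y = S.profile x := hy
    rcases S.profile_eq_partialProfile_or_exists_mem_Ioo t x with heq | ⟨i, hlt, hgt⟩
    · exact S.exists_netPoint_near_of_profile_eq hx heq
    · refine S.exists_netPoint_near_of_near_toothSet ⟨_, toothPos_mem_toothSet i, ?_⟩
        (S.profile_mem_Icc x)
      rw [abs_of_pos (sub_pos.2 hlt)]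
      linarith
  · exact S.exists_netPoint_near_of_near_toothSet ⟨x, hxC, by simp⟩ hy

variable {S}

theorem computable_partialProfile (hheight : Computable S.height) (htooth : Computable S.tooth) :
    Computable fun x : ℕ × ℚ => S.partialProfile x.1 x.2 := by
  have hbump : Computable fun x : (ℕ × ℚ) × ℕ => S.bump x.2 x.1.2 := by
    simp only [bump, peak, Rat.cast_id]
    fun_prop
  have hsum : Computable fun x : ℕ × ℚ => ∑ s ∈ Finset.range x.1, S.bump s x.2 :=
    computable_rat_sum_range hbump (by fun_prop)
  exact hsum

theorem computable_netPoint (hheight : Computable S.height) (htooth : Computable S.tooth) :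
    Computable fun x : ℕ × ℕ × ℕ => S.netPoint x.1 x.2.1 x.2.2 := by
  have hgrid : Computable fun x : ℕ × ℕ × ℕ => gridPoint x.1 x.2.2 := by
    unfold gridPoint
    fun_prop
  have hprofile := (computable_partialProfile hheight htooth).comp (Computable.fst.pair hgrid)
  unfold netPoint
  fun_prop

theorem isComputableNet_netPoint (hheight : Computable S.height) (htooth : Computable S.tooth) :
    IsComputableNet (comb S.profile toothSet)
      (fun t k => S.netPoint t (k / gridSize t) (k % gridSize t)) (fun t => (t + 2) * gridSize t)
      (fun t => (1 / 2) ^ t) := by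
  have hsize : Computable gridSize := by
    unfold gridSize
    fun_prop
  have hpos : ∀ t, 0 < gridSize t := fun t => Nat.succ_pos _
  refine ⟨?_, by fun_prop, by fun_prop, ?_, fun t k _ => ?_, fun t z hz => ?_⟩
  · exact (computable_netPoint hheight htooth).comp
      (g := fun x : ℕ × ℕ => (x.1, x.2 / gridSize x.1, x.2 % gridSize x.1)) (by fun_prop)
  · simpa using tendsto_pow_atTop_nhds_zero_of_lt_one (show (0 : ℝ) ≤ 1 / 2 by norm_num)
      (by norm_num)
  · simpa using S.exists_mem_comb_near_netPoint t (k / gridSize t) (Nat.mod_lt k (hpos t))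
  · obtain ⟨j, hj, r, hr, hdist⟩ := S.exists_netPoint_near t hz
    refine ⟨gridSize t * j + r, ?_, ?_⟩
    · calc gridSize t * j + r < gridSize t * (j + 1) := by rw [mul_add_one]; gcongr
        _ ≤ (t + 2) * gridSize t := by rw [mul_comm]; exact Nat.mul_le_mul_right _ hj
    · simpa [Nat.mul_add_div (hpos t), Nat.div_eq_of_lt hr, Nat.mod_eq_of_lt hr] using hdist

theorem isComputableClosed_comb (hheight : Computable S.height) (htooth : Computable S.tooth) :
    IsComputableClosed (comb S.profile toothSet) :=
  (isComputableNet_netPoint hheight htooth).isComputableClosed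
    (isClosed_comb S.continuous_profile isClosed_toothSet)

end Net

end BumpScheme

section Diagonalization

/-- At stage `s` the construction looks at the c.e. set of this index. -/
def stageIndex (s : ℕ) : ℕ :=
  (revisit (ℕ × ℕ × ((ℚ × ℚ) × ℚ)) s).1

/-- At stage `s` the construction may put a bump next to this tooth. -/
def stageTooth (s : ℕ) : ℕ :=
  (revisit (ℕ × ℕ × ((ℚ × ℚ) × ℚ)) s).2.1

/-- At stage `s` the construction asks whether this ball has been enumerated. -/
def stageBall (s : ℕ) : (ℚ × ℚ) × ℚ :=
  (revisit (ℕ × ℕ × ((ℚ × ℚ) × ℚ)) s).2.2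

/-- The height at which the complement of the `n`-th c.e. union of balls is tested. -/
def level (n : ℕ) : ℚ :=
  (1 / 2) ^ (n + 2)

/-- By stage `s` the c.e. set `stageIndex s` has enumerated the ball `stageBall s`, which covers
the whole width of the `s`-th bump at height `level (stageIndex s)`. -/
def Alarm (s : ℕ) : Prop :=
  stageTooth s ≤ s ∧ HaltsWithin (stageIndex s) s (stageBall s) ∧
    ratPoint (toothPos (stageTooth s), level (stageIndex s)) ∈ ballOfCode (stageBall s) ∧
    ratPoint (toothPos (stageTooth s) + (1 / 2) ^ (s + 3), level (stageIndex s)) ∈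
      ballOfCode (stageBall s)

/-- The first alarm raised on behalf of the c.e. set `stageIndex s`. -/
def FirstAlarm (s : ℕ) : Prop :=
  Alarm s ∧ ∀ r < s, Alarm r → stageIndex r ≠ stageIndex s

theorem level_pos (n : ℕ) : 0 < (level n : ℝ) := by
  simp [level]

theorem exists_stage_eq (n i : ℕ) (c : (ℚ × ℚ) × ℚ) (m : ℕ) :
    ∃ s ≥ m, stageIndex s = n ∧ stageTooth s = i ∧ stageBall s = c := by
  obtain ⟨s, hs, hrevisit⟩ := exists_revisit_eq (n, i, c) m
  exact ⟨s, hs, by simp [stageIndex, stageTooth, stageBall, hrevisit]⟩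

@[fun_prop]
theorem computable_stageIndex : Computable stageIndex := by
  unfold stageIndex
  fun_prop

@[fun_prop]
theorem computable_stageTooth : Computable stageTooth := by
  unfold stageTooth
  fun_prop

@[fun_prop]
theorem computable_stageBall : Computable stageBall := by
  unfold stageBall
  fun_prop

theorem computablePred_alarm : ComputablePred Alarm := by
  unfold Alarm level
  simp only [ratPoint_mem_ballOfCode_iff]
  fun_prop

theorem computablePred_firstAlarm : ComputablePred FirstAlarm := by
  have halarm := computablePred_alarm
  have hearlier : ComputablePred fun s => ∀ r < s, Alarm r → stageIndex r ≠ stageIndex s :=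
    computablePred_forall_lt (p := fun s r => Alarm r → stageIndex r ≠ stageIndex s)
      (by fun_prop) (by fun_prop)
  exact computablePred_and halarm hearlier

theorem FirstAlarm.stageIndex_injOn : InjOn stageIndex {s | FirstAlarm s} := by
  intro r hr s hs hrs
  rcases lt_trichotomy r s with hlt | heq | hgt
  · exact absurd hrs (hs.2 r hlt hr.1)
  · exact heq
  · exact absurd hrs.symm (hr.2 s hgt hs.1)

theorem Alarm.exists_firstAlarm {s : ℕ} (hs : Alarm s) :
    ∃ r, FirstAlarm r ∧ stageIndex r = stageIndex s := by
  classical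
  have hex : ∃ r, Alarm r ∧ stageIndex r = stageIndex s := ⟨s, hs, rfl⟩
  obtain ⟨halarm, hindex⟩ := Nat.find_spec hex
  exact ⟨Nat.find hex, ⟨halarm, fun r hr hr' hrindex =>
    Nat.find_min hex hr ⟨hr', hrindex.trans hindex⟩⟩, hindex⟩

theorem sum_half_pow_succ_le_one (F : Finset ℕ) : ∑ n ∈ F, (1 / 2 : ℚ) ^ (n + 1) ≤ 1 := by
  have hsum : HasSum (fun n : ℕ => (1 / 2 : ℝ) ^ (n + 1)) 1 := by
    simpa [pow_succ', mul_comm, div_eq_mul_inv] using hasSum_geometric_two' (1 : ℝ)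
  have hle := sum_le_hasSum F (fun n _ => by positivity) hsum
  rw [← Rat.cast_le (K := ℝ)]
  push_cast
  exact hle

open Classical in
/-- The scheme that answers the first alarm for the `n`-th c.e. set by a bump of height `2⁻ⁿ⁻¹`. -/
noncomputable def diagonalScheme : BumpScheme where
  height s := if FirstAlarm s then (1 / 2) ^ (stageIndex s + 1) else 0
  tooth := stageTooth
  height_nonneg s := by positivity
  sum_height_le_one F := by
    rw [← Finset.sum_filter, ← Finset.sum_image (f := fun n => (1 / 2 : ℚ) ^ (n + 1))]
    · exact sum_half_pow_succ_le_one _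
    · exact FirstAlarm.stageIndex_injOn.mono fun s hs => (Finset.mem_filter.1 hs).2
  tooth_le s hs := by
    by_contra hlt
    exact hs (if_neg fun hfirst => hlt hfirst.1.1)

theorem diagonalScheme_height {s : ℕ} (hs : FirstAlarm s) :
    diagonalScheme.height s = (1 / 2) ^ (stageIndex s + 1) :=
  if_pos hs

theorem computable_diagonalScheme_height : Computable diagonalScheme.height := by
  have hfirst := computablePred_firstAlarm
  simp only [diagonalScheme]
  fun_prop

theorem isComputableClosed_comb_diagonalScheme :
    IsComputableClosed (comb diagonalScheme.profile toothSet) :=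
  BumpScheme.isComputableClosed_comb computable_diagonalScheme_height computable_stageTooth

theorem mk_mem_ballOfCode_of_mem_Icc {c : (ℚ × ℚ) × ℚ} {a b x y : ℝ} (ha : (a, y) ∈ ballOfCode c)
    (hb : (b, y) ∈ ballOfCode c) (hx : x ∈ Icc a b) : (x, y) ∈ ballOfCode c := by
  simp only [mem_ballOfCode_iff, Prod.dist_eq, max_lt_iff, Real.dist_eq, abs_lt] at ha hb ⊢
  exact ⟨⟨by linarith [hx.1], by linarith [hx.2]⟩, ha.2⟩

theorem FirstAlarm.exists_profile_mem_ballOfCode {s : ℕ} (hs : FirstAlarm s) :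
    ∃ x ∈ Icc (1 / 8 : ℝ) (7 / 8), x ∉ toothSet ∧
      (x, diagonalScheme.profile x) ∈ ballOfCode (stageBall s) := by
  have hlevel : (level (stageIndex s) : ℝ) ∈ Icc (0 : ℝ) (diagonalScheme.height s) := by
    refine ⟨(level_pos _).le, Rat.cast_le.2 ?_⟩
    rw [diagonalScheme_height hs]
    exact pow_le_pow_of_le_one (by norm_num) (by norm_num) (by omega)
  obtain ⟨x, ⟨hge, hle⟩, hx⟩ := diagonalScheme.exists_profile_eq s hlevel
  have hhalf := half_lt_toothPos (stageTooth s)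
  have hwidth := half_pow_succ (s + 3)
  obtain ⟨-, -, hleft, hright⟩ := hs.1
  rw [diagonalScheme.cast_peak] at hle
  change (toothPos (stageTooth s) : ℝ) ≤ x at hge
  change x ≤ (toothPos (stageTooth s) : ℝ) + _ at hle
  refine ⟨x, ⟨by linarith, ?_⟩, ?_, ?_⟩
  · linarith [toothPos_le_three_quarters (stageTooth s),
      half_pow_le_half_pow (show 3 ≤ s + 4 by omega)]
  · exact diagonalScheme.notMem_toothSet_of_profile_ne_zero (by linarith)
      (hx ▸ (level_pos _).ne')
  · rw [hx]
    refine mk_mem_ballOfCode_of_mem_Icc hleft hright ⟨hge, ?_⟩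
    push_cast
    linarith [half_pow_pos (s + 4)]

theorem exists_firstAlarm_of_mem_ballOfCode {n i k : ℕ} {c : (ℚ × ℚ) × ℚ}
    (hhalt : HaltsWithin n k c) (hball : ratPoint (toothPos i, level n) ∈ ballOfCode c) :
    ∃ s, FirstAlarm s ∧ stageIndex s = n := by
  have hlim : Tendsto (fun s : ℕ => ratPoint (toothPos i + (1 / 2) ^ (s + 3), level n)) atTop
      (𝓝 (ratPoint (toothPos i, level n))) := by
    have hpow : Tendsto (fun s : ℕ => (1 / 2 : ℝ) ^ (s + 3)) atTop (𝓝 0) :=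
      (tendsto_pow_atTop_nhds_zero_of_lt_one (by norm_num) (by norm_num)).comp
        (tendsto_add_atTop_nat 3)
    simpa [ratPoint] using (hpow.const_add (toothPos i : ℝ)).prodMk_nhds
      (tendsto_const_nhds (x := (level n : ℝ)))
  obtain ⟨m, hm⟩ := eventually_atTop.1 (hlim.eventually (isOpen_ball.mem_nhds hball))
  obtain ⟨s, hs, rfl, rfl, rfl⟩ := exists_stage_eq n i c (max m (max i k))
  have halarm : Alarm s :=
    ⟨by omega, hhalt.mono (by omega), hball, hm s (by omega)⟩
  exact halarm.exists_firstAlarm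

theorem IsPi01Closed.isClosed {B : Set (ℝ × ℝ)} (hB : IsPi01Closed B) : IsClosed B := by
  obtain ⟨W, -, rfl⟩ := hB
  rw [← compl_eq_univ_sdiff]
  exact (isOpen_biUnion fun c _ => isOpen_ball).isClosed_compl

theorem exists_forall_toothPos_level_mem {B : Set (ℝ × ℝ)} (hB : IsPi01Closed B)
    (hgraph : ∀ x ∈ Icc (1 / 8 : ℝ) (7 / 8), x ∉ toothSet → (x, diagonalScheme.profile x) ∈ B) :
    ∃ n, ∀ i, ((toothPos i : ℝ), (level n : ℝ)) ∈ B := by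
  obtain ⟨W, hW, rfl⟩ := hB
  obtain ⟨n, hn⟩ := exists_forall_iff_haltsWithin hW
  simp only [Set.mem_sdiff, mem_univ, true_and, mem_iUnion, mem_ofPred_eq, not_exists] at hgraph ⊢
  refine ⟨n, fun i c hc hball => ?_⟩
  obtain ⟨k, hk⟩ := (hn c).1 hc
  obtain ⟨s, hs, rfl⟩ := exists_firstAlarm_of_mem_ballOfCode hk hball
  obtain ⟨x, hx, hxtooth, hxball⟩ := hs.exists_profile_mem_ballOfCode
  exact hgraph x hx hxtooth (stageBall s) ((hn _).2 ⟨s, hs.1.2.1⟩) hxball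

theorem eighth_le_hausdorffDist_comb_diagonalScheme {B : Set (ℝ × ℝ)}
    (hBK : B ⊆ comb diagonalScheme.profile toothSet) (hB : IsPi01Closed B)
    (hconn : IsConnected B) (hlc : LocallyConnectedSpace B) :
    1 / 8 ≤ hausdorffDist B (comb diagonalScheme.profile toothSet) := by
  by_contra! hclose
  obtain ⟨n, hn⟩ := exists_forall_toothPos_level_mem hB fun x hx hxtooth =>
    mk_apply_mem_of_hausdorffDist_comb_lt diagonalScheme.profile_mem_Icc hBK hconn hclose
      (by norm_num at hx ⊢; exact hx) hxtooth
  exact diagonalScheme.not_locallyConnectedSpace_of_forall_toothPos_mem hBK hB.isClosed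
    (level_pos n) hn hlc

end Diagonalization

theorem exists_contractible_computable_set_without_pi01_peano_subsets :
    ∃ K : Set (ℝ × ℝ), K.Nonempty ∧ IsComputableClosed K ∧
      K ⊆ Set.Icc (0:ℝ) 1 ×ˢ Set.Icc (0:ℝ) 1 ∧ ContractibleSpace ↥K ∧
      ∃ ε : ℝ, 0 < ε ∧ ∀ B : Set (ℝ × ℝ), B ⊆ K → B.Nonempty → IsPi01Closed B →
        IsConnected B → LocallyConnectedSpace ↥B → ε ≤ Metric.hausdorffDist B K := by
  have hcont := diagonalScheme.continuous_profile
  have hrange := diagonalScheme.profile_mem_Icc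
  refine ⟨comb diagonalScheme.profile toothSet, ⟨_, mk_apply_mem_comb (left_mem_Icc.2 zero_le_one)⟩,
    isComputableClosed_comb_diagonalScheme, comb_subset_unit_square hrange,
    contractibleSpace_comb hcont hrange, 1 / 8, by norm_num, ?_⟩
  intro B hBK _ hB hconn hlc
  exact eighth_le_hausdorffDist_comb_diagonalScheme hBK hB hconn hlc
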